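/- arXiv:1711.01066 — 2 statements merged into one kernel-verified Lean document; each statement's English description precedes it below -/
import Mathlib

section
/- For every integer d ≥ 2 there exist a finite bipartite d-regular simple graph H and a proper edge precoloring of H with colors from {1,…,d} having exactly two precolored edges, such that the precoloring does not extend to a proper d-edge coloring of H. -/
/-- A proper edge precoloring of `G` with precolored edge set `D` and colors in `S`. -/
def IsProperPrecoloring {V : Type*} (G : SimpleGraph V) (D : Set (Sym2 V))
    (φ : Sym2 V → ℕ) (S : Set ℕ) : Prop :=
  D ⊆ G.edgeSet ∧ (∀ e ∈ D, φ e ∈ S) ∧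
    ∀ e ∈ D, ∀ e' ∈ D, e ≠ e' → (∃ v, v ∈ e ∧ v ∈ e') → φ e ≠ φ e'

/-- A proper `t`-edge coloring of `G`: colors in `{1,…,t}`, distinct on adjacent edges. -/
def IsProperEdgeColoring {V : Type*} (G : SimpleGraph V) (t : ℕ)
    (f : Sym2 V → ℕ) : Prop :=
  (∀ e ∈ G.edgeSet, f e ∈ Set.Icc 1 t) ∧
    ∀ e ∈ G.edgeSet, ∀ e' ∈ G.edgeSet, e ≠ e' → (∃ v, v ∈ e ∧ v ∈ e') → f e ≠ f e'

/-- Two copies of `K_{d,d}` with an edge `z z` of each swapped across the copies. -/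
def swapGraph (d : ℕ) (z : Fin d) : SimpleGraph (Bool × Bool × Fin d) where
  Adj u v := u.2.1 ≠ v.2.1 ∧ (u.1 = v.1 ↔ ¬ (u.2.2 = z ∧ v.2.2 = z))
  symm := ⟨by
    rintro u v ⟨h1, h2⟩
    refine ⟨h1.symm, ?_⟩
    rw [eq_comm, h2, and_comm]⟩
  loopless := ⟨fun u h => h.1 rfl⟩

/-- The neighbor of `u` with index `j`. -/
def swapNbr (d : ℕ) (z : Fin d) (u : Bool × Bool × Fin d) (j : Fin d) : Bool × Bool × Fin d :=
  (if u.2.2 = z ∧ j = z then !u.1 else u.1, !u.2.1, j)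

theorem swapNbr_inj (d : ℕ) (z : Fin d) (u : Bool × Bool × Fin d) :
    Function.Injective (swapNbr d z u) := by
  intro i j h
  simpa [swapNbr] using congrArg (fun x => x.2.2) h

theorem swapGraph_adj_iff (d : ℕ) (z : Fin d) (u v : Bool × Bool × Fin d) :
    (swapGraph d z).Adj u v ↔ v = swapNbr d z u v.2.2 := by
  obtain ⟨c, s, i⟩ := u
  obtain ⟨c', s', j⟩ := v
  simp only [swapGraph, swapNbr, Prod.mk.injEq, and_true]
  by_cases h : i = z ∧ j = z
  · simp only [h]
    cases c <;> cases c' <;> cases s <;> cases s' <;> simp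
  · simp only [h]
    cases c <;> cases c' <;> cases s <;> cases s' <;> simp

theorem swapGraph_adj_nbr (d : ℕ) (z : Fin d) (u : Bool × Bool × Fin d) (j : Fin d) :
    (swapGraph d z).Adj u (swapNbr d z u j) := by
  rw [swapGraph_adj_iff]; rfl

/-- In a proper `d`-edge coloring, the two crossing edges cannot have colors 1 and 2. -/
theorem swapGraph_not_ext (d : ℕ) (hd : 2 ≤ d) (z : Fin d)
    (f : Sym2 (Bool × Bool × Fin d) → ℕ) (hf : IsProperEdgeColoring (swapGraph d z) d f)
    (h1 : f s((false, false, z), (true, true, z)) = 1)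
    (h2 : f s((true, false, z), (false, true, z)) = 2) : False := by
  obtain ⟨hc, hp⟩ := hf
  have hp' : ∀ u v w, (swapGraph d z).Adj u v → (swapGraph d z).Adj u w →
      f s(u, v) = f s(u, w) → v = w := by
    intro u v w huv huw hfe
    by_contra hne
    refine hp s(u, v) huv s(u, w) huw ?_ ⟨u, by simp, by simp⟩ hfe
    exact fun h => hne (Sym2.congr_right.1 h)
  have key : ∀ u, ∃ i, f s(u, swapNbr d z u i) = 1 := by
    intro u
    let g : Fin d → Finset.Icc 1 d := fun i => ⟨f s(u, swapNbr d z u i), by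
      have := hc s(u, swapNbr d z u i) (swapGraph_adj_nbr d z u i)
      simpa using this⟩
    have hg : Function.Injective g := by
      intro i j hij
      exact swapNbr_inj d z u (hp' _ _ _ (swapGraph_adj_nbr d z u i) (swapGraph_adj_nbr d z u j)
        (congrArg Subtype.val hij))
    have hb : Function.Bijective g :=
      (Fintype.bijective_iff_injective_and_card g).2 ⟨hg, by simp⟩
    obtain ⟨i, hi⟩ := hb.2 ⟨1, by simp; omega⟩
    exact ⟨i, congrArg Subtype.val hi⟩
  choose τ hτ using fun j : Fin d => key (false, true, j)
  have hz : ∀ j, τ j ≠ z := by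
    intro j hj
    have h := hτ j
    rw [hj] at h
    by_cases hjz : j = z
    · subst hjz
      simp only [swapNbr, and_self, if_true, Bool.not_false, Bool.not_true] at h
      rw [Sym2.eq_swap, h2] at h
      omega
    · simp only [swapNbr, hjz, false_and, if_false, Bool.not_true] at h
      rw [Sym2.eq_swap] at h
      have := hp' (false, false, z) (false, true, j) (true, true, z)
        (by simp [swapGraph, hjz]) (by simp [swapGraph]) (h.trans h1.symm)
      simp at this
  have hn : ∀ j, swapNbr d z (false, true, j) (τ j) = (false, false, τ j) := by
    intro j
    simp [swapNbr, hz j]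
  have hinj : Function.Injective τ := by
    intro i j hij
    have hi := hτ i
    have hj := hτ j
    rw [hn, Sym2.eq_swap] at hi hj
    rw [← hij] at hj
    have := hp' (false, false, τ i) (false, true, i) (false, true, j)
      (by simp [swapGraph, hz i]) (by simp [swapGraph, hz i]) (hi.trans hj.symm)
    simpa using this
  obtain ⟨j, hj⟩ := Finite.surjective_of_injective hinj z
  exact hz j hj

/-- For every `d ≥ 2` there are a finite bipartite `d`-regular simple
graph `H` and a proper edge precoloring of `H` with colors from `{1,…,d}` having exactly
two precolored edges which does not extend to a proper `d`-edge coloring of `H`. -/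
theorem two_precolored_edges_not_extendable (d : ℕ) (hd : 2 ≤ d) :
    ∃ (n : ℕ) (H : SimpleGraph (Fin n)) (D : Finset (Sym2 (Fin n)))
      (φ : Sym2 (Fin n) → ℕ),
      H.Colorable 2 ∧
      (∀ v, (H.neighborSet v).ncard = d) ∧
      D.card = 2 ∧
      IsProperPrecoloring H (↑D) φ (Set.Icc 1 d) ∧
      ¬ ∃ f, IsProperEdgeColoring H d f ∧ ∀ e ∈ D, f e = φ e := by
  let z : Fin d := ⟨0, by omega⟩
  let E := Fintype.equivFin (Bool × Bool × Fin d)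
  let e1 : Sym2 (Fin _) := s(E (false, false, z), E (true, true, z))
  let e2 : Sym2 (Fin _) := s(E (true, false, z), E (false, true, z))
  have hne : e1 ≠ e2 := by simp [e1, e2]
  refine ⟨_, (swapGraph d z).comap E.symm, {e1, e2}, fun e => if e = e1 then 1 else 2,
    ?_, ?_, ?_, ?_, ?_⟩
  · refine ⟨SimpleGraph.Coloring.mk (fun v => if (E.symm v).2.1 then 0 else 1) ?_⟩
    intro u v h
    have h' := h.1
    revert h'
    cases (E.symm u).2.1 <;> cases (E.symm v).2.1 <;> simp
  · intro v
    have : ((swapGraph d z).comap E.symm).neighborSet v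
        = Set.range (fun i => E (swapNbr d z (E.symm v) i)) := by
      ext w
      simp only [SimpleGraph.mem_neighborSet, SimpleGraph.comap_adj, Set.mem_range]
      rw [swapGraph_adj_iff]
      constructor
      · intro h
        exact ⟨_, by rw [← h]; simp⟩
      · rintro ⟨i, rfl⟩
        simp [swapNbr]
    have hi : Function.Injective (fun i => E (swapNbr d z (E.symm v) i)) :=
      E.injective.comp (swapNbr_inj d z _)
    rw [this, ← Set.image_univ, Set.ncard_image_of_injective _ hi, Set.ncard_univ]
    simp
  · exact Finset.card_pair hne
  · refine ⟨?_, ?_, ?_⟩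
    · intro e he
      simp only [Finset.coe_insert, Finset.coe_singleton, Set.mem_insert_iff,
        Set.mem_singleton_iff] at he
      rcases he with rfl | rfl <;> simp [e1, e2, swapGraph]
    · intro e _
      simp only [Set.mem_Icc]
      split_ifs <;> omega
    · intro e he e' he' hee _
      simp only [Finset.coe_insert, Finset.coe_singleton, Set.mem_insert_iff,
        Set.mem_singleton_iff] at he he'
      rcases he with rfl | rfl <;> rcases he' with rfl | rfl <;>
        simp_all [hne.symm]
  · rintro ⟨f, ⟨hc, hp⟩, hf⟩
    have hmem : ∀ e ∈ (swapGraph d z).edgeSet,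
        e.map E ∈ ((swapGraph d z).comap E.symm).edgeSet := by
      intro e
      induction e with | _ u v => simp
    refine swapGraph_not_ext d hd z (fun e => f (e.map E)) ⟨?_, ?_⟩ ?_ ?_
    · intro e he
      exact hc _ (hmem e he)
    · rintro e he e' he' hee ⟨v, hv, hv'⟩
      refine hp _ (hmem e he) _ (hmem e' he') ((Sym2.map.injective E.injective).ne hee)
        ⟨E v, Sym2.mem_map.2 ⟨v, hv, rfl⟩, Sym2.mem_map.2 ⟨v, hv', rfl⟩⟩
    · have := hf e1 (by simp)
      simpa using this
    · have := hf e2 (by simp)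
      simpa [hne.symm] using this
end

section
/- For every integer n ≥ 2 there exist a finite bipartite n-regular simple graph G whose vertex connectivity is at least n−1, and a proper edge precoloring of G with colors from {1,…,n} having exactly two precolored edges, both colored 1, such that the precoloring does not extend to a proper n-edge coloring of G. (Such a graph is obtained from two disjoint copies of the complete bipartite graph K_{n,n−1} by joining each vertex of degree n−1 in the first copy to its counterpart in the second copy by an edge, and precoloring two of these connecting edges with color 1.) -/
abbrev HVert (n : ℕ) : Type := Bool × (Fin n ⊕ Fin (n - 1))

/-- Adjacency relation of the construction. -/
def hAdj {n : ℕ} : HVert n → HVert n → Prop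
  | (c, Sum.inl i), (d, Sum.inl j) => c ≠ d ∧ i = j
  | (c, Sum.inl _), (d, Sum.inr _) => c = d
  | (c, Sum.inr _), (d, Sum.inl _) => c = d
  | (_, Sum.inr _), (_, Sum.inr _) => False

/-- Two copies of `K_{n,n-1}` joined by a matching. -/
def hGraph (n : ℕ) : SimpleGraph (HVert n) where
  Adj := hAdj
  symm := ⟨by
    rintro ⟨c, i | i⟩ ⟨d, j | j⟩ h <;> simp only [hAdj] at h ⊢
    · exact ⟨h.1.symm, h.2.symm⟩
    · exact h.symm
    · exact h.symm⟩
  loopless := ⟨by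
    rintro ⟨c, i | i⟩ h <;> simp [hAdj] at h⟩

theorem hGraph_colorable (n : ℕ) : (hGraph n).Colorable 2 := by
  let C : (hGraph n).Coloring Bool :=
    SimpleGraph.Coloring.mk (fun v => match v with
      | (c, Sum.inl _) => c
      | (c, Sum.inr _) => !c) (by
      rintro ⟨c, i | i⟩ ⟨d, j | j⟩ h <;> simp only [hGraph, hAdj] at h ⊢
      · exact h.1
      · subst h; cases c <;> simp
      · subst h; cases c <;> simp)
  simpa using C.colorable

theorem hGraph_degree (n : ℕ) (hn : 2 ≤ n) (v : HVert n) :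
    ((hGraph n).neighborSet v).ncard = n := by
  obtain ⟨c, i | i⟩ := v
  · have : (hGraph n).neighborSet (c, Sum.inl i) =
        insert ((!c, Sum.inl i) : HVert n)
          (Set.range fun j : Fin (n - 1) => ((c, Sum.inr j) : HVert n)) := by
      ext ⟨d, j | j⟩
      · simp [hGraph, hAdj]
        cases c <;> cases d <;> simp [eq_comm]
      · simp [hGraph, hAdj]
    rw [this, Set.ncard_insert_of_notMem (by simp) (Set.toFinite _), ← Set.image_univ,
      Set.ncard_image_of_injective _ (by intro a b h; simpa using h), Set.ncard_univ]
    simp; omega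
  · have : (hGraph n).neighborSet (c, Sum.inr i) =
        (Set.range fun j : Fin n => ((c, Sum.inl j) : HVert n)) := by
      ext ⟨d, j | j⟩
      · simp [hGraph, hAdj]
      · simp [hGraph, hAdj]
    rw [this, ← Set.image_univ,
      Set.ncard_image_of_injective _ (by intro a b h; simpa using h), Set.ncard_univ]
    simp

/-- A small set misses the fibre of some index for any retraction-like map. -/
theorem exists_fibre_avoid {α : Type*} [Finite α] {k : ℕ} (s : Set α) (hs : s.ncard < k)
    (p : α → Fin k) : ∃ i, ∀ x, p x = i → x ∉ s := by
  by_contra! h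
  have h1 : p '' s = Set.univ := by
    ext i
    obtain ⟨x, hx, hxs⟩ := h i
    simp only [Set.mem_image, Set.mem_univ, iff_true]
    exact ⟨x, hxs, hx⟩
  have h2 := Set.ncard_image_le (f := p) (Set.toFinite s)
  rw [h1, Set.ncard_univ, Nat.card_eq_fintype_card, Fintype.card_fin] at h2
  omega

theorem hGraph_connected (n : ℕ) (hn : 2 ≤ n) (s : Set (HVert n)) (hs : s.ncard < n - 1) :
    ((hGraph n).induce sᶜ).Connected := by
  obtain ⟨a, ha⟩ := exists_fibre_avoid s (k := n) (by omega)
    (fun v => match v with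
      | (_, Sum.inl i) => i
      | (_, Sum.inr _) => ⟨0, by omega⟩)
  obtain ⟨b, hb⟩ := exists_fibre_avoid s (k := n - 1) hs
    (fun v => match v with
      | (_, Sum.inl _) => ⟨0, by omega⟩
      | (_, Sum.inr i) => i)
  have hA : ∀ c, ((c, Sum.inl a) : HVert n) ∈ sᶜ := fun c => ha _ rfl
  have hB : ∀ c, ((c, Sum.inr b) : HVert n) ∈ sᶜ := fun c => hb _ rfl
  let H := (hGraph n).induce sᶜ
  have key : ∀ (x y : HVert n) (hx : x ∈ sᶜ) (hy : y ∈ sᶜ), hAdj x y →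
      H.Reachable ⟨x, hx⟩ ⟨y, hy⟩ := by
    intro x y hx hy h
    exact SimpleGraph.Adj.reachable (G := H) h
  have hAA : H.Reachable ⟨_, hA true⟩ ⟨_, hA false⟩ := key _ _ _ _ (by simp [hAdj])
  have hAc : ∀ c, H.Reachable ⟨_, hA c⟩ ⟨_, hA false⟩ := by
    rintro (_ | _)
    · rfl
    · exact hAA
  have hall : ∀ (x : HVert n) (hx : x ∈ sᶜ), H.Reachable ⟨x, hx⟩ ⟨_, hA false⟩ := by
    rintro ⟨c, i | i⟩ hx
    · exact ((key _ _ hx (hB c) (by simp [hAdj])).trans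
        (key _ _ (hB c) (hA c) (by simp [hAdj]))).trans (hAc c)
    · exact (key _ _ hx (hA c) (by simp [hAdj])).trans (hAc c)
  have : Nonempty (sᶜ : Set (HVert n)) := ⟨⟨_, hA false⟩⟩
  exact ⟨fun x y => (hall x.1 x.2).trans (hall y.1 y.2).symm⟩

theorem hGraph_not_ext (n : ℕ) (hn : 2 ≤ n) (f : Sym2 (HVert n) → ℕ)
    (hf : IsProperEdgeColoring (hGraph n) n f) (a b : Fin n) (hab : a ≠ b)
    (ha : f s((false, Sum.inl a), (true, Sum.inl a)) = 1)
    (hb : f s((false, Sum.inl b), (true, Sum.inl b)) = 1) : False := by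
  obtain ⟨h1, h2⟩ := hf
  have hE : ∀ (j : Fin (n - 1)) (i : Fin n),
      s(((false, Sum.inr j) : HVert n), (false, Sum.inl i)) ∈ (hGraph n).edgeSet := by
    intro j i; simp [hGraph, hAdj]
  have hM : ∀ (i : Fin n),
      s(((false, Sum.inl i) : HVert n), (true, Sum.inl i)) ∈ (hGraph n).edgeSet := by
    intro i; simp [hGraph, hAdj]
  have hex : ∀ j : Fin (n - 1), ∃ i : Fin n,
      f s(((false, Sum.inr j) : HVert n), (false, Sum.inl i)) = 1 := by
    intro j
    have hinj : Function.Injective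
        (fun i : Fin n => f s(((false, Sum.inr j) : HVert n), (false, Sum.inl i))) := by
      intro i i' h
      by_contra hne
      exact h2 _ (hE j i) _ (hE j i') (by simpa using hne) ⟨(false, Sum.inr j), by simp, by simp⟩ h
    have himg : Finset.univ.image
        (fun i : Fin n => f s(((false, Sum.inr j) : HVert n), (false, Sum.inl i)))
        = Finset.Icc 1 n := by
      apply Finset.eq_of_subset_of_card_le
      · intro x hx
        simp only [Finset.mem_image, Finset.mem_univ, true_and] at hx
        obtain ⟨i, rfl⟩ := hx
        have := h1 _ (hE j i)
        simpa using this
      · rw [Finset.card_image_of_injective _ hinj]; simp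
    have : 1 ∈ Finset.Icc 1 n := by simp; omega
    rw [← himg] at this
    simpa using this
  choose g hg using hex
  have ginj : Function.Injective g := by
    intro j j' h
    by_contra hne
    refine h2 _ (hE j (g j)) _ (hE j' (g j')) ?_ ⟨(false, Sum.inl (g j)), by simp, by simp [h]⟩
      ((hg j).trans (hg j').symm)
    simp [h, hne]
  have gne : ∀ c : Fin n, f s((false, Sum.inl c), (true, Sum.inl c)) = 1 → ∀ j, g j ≠ c := by
    intro c hc j h
    refine h2 _ (hE j (g j)) _ (hM c) ?_ ⟨(false, Sum.inl c), by simp [h], by simp⟩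
      ((hg j).trans hc.symm)
    simp
  have hsub : Finset.univ.image g ⊆ Finset.univ \ {a, b} := by
    intro x hx
    simp only [Finset.mem_image, Finset.mem_univ, true_and] at hx
    obtain ⟨j, rfl⟩ := hx
    simp [gne a ha j, gne b hb j]
  have hc := Finset.card_le_card hsub
  rw [Finset.card_image_of_injective _ ginj, Finset.card_sdiff_of_subset (by simp),
    Finset.card_pair hab] at hc
  simp at hc
  omega

/-- For every `n ≥ 2` there are a finite bipartite `n`-regular simple
graph `G` with vertex connectivity at least `n - 1` (it has more than `n - 1` vertices
and stays connected after deleting any set of fewer than `n - 1` vertices) and a proper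
edge precoloring of `G` with colors from `{1,…,n}` having exactly two precolored edges,
both colored `1`, which does not extend to a proper `n`-edge coloring of `G`. -/
theorem highly_connected_not_extendable (n : ℕ) (hn : 2 ≤ n) :
    ∃ (m : ℕ) (G : SimpleGraph (Fin m)) (D : Finset (Sym2 (Fin m)))
      (φ : Sym2 (Fin m) → ℕ),
      G.Colorable 2 ∧
      (∀ v, (G.neighborSet v).ncard = n) ∧
      n - 1 < m ∧
      (∀ s : Set (Fin m), s.ncard < n - 1 → (G.induce sᶜ).Connected) ∧
      D.card = 2 ∧
      (∀ e ∈ D, φ e = 1) ∧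
      IsProperPrecoloring G (↑D) φ (Set.Icc 1 n) ∧
      ¬ ∃ f, IsProperEdgeColoring G n f ∧ ∀ e ∈ D, f e = φ e := by
  obtain ⟨e⟩ : Nonempty (Fin (Fintype.card (HVert n)) ≃ HVert n) :=
    ⟨(Fintype.equivFin (HVert n)).symm⟩
  let G := (hGraph n).comap e
  let ι : G ≃g hGraph n := SimpleGraph.Iso.comap e (hGraph n)
  let a : Fin n := ⟨0, by omega⟩
  let b : Fin n := ⟨1, by omega⟩
  have hab : a ≠ b := by simp [a, b]
  let E : Fin n → Sym2 (Fin (Fintype.card (HVert n))) := fun i =>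
    s(e.symm (false, Sum.inl i), e.symm (true, Sum.inl i))
  have hEne : E a ≠ E b := by simp [E, hab]
  refine ⟨_, G, {E a, E b}, fun _ => 1, ?_, ?_, ?_, ?_, ?_, ?_, ?_, ?_⟩
  · exact (hGraph_colorable n).of_hom ι.toHom
  · intro v
    refine Eq.trans ?_ (hGraph_degree n hn (e v))
    have : (hGraph n).neighborSet (e v) = e '' (G.neighborSet v) := by
      ext w
      simp only [SimpleGraph.mem_neighborSet, Set.mem_image]
      constructor
      · intro h
        exact ⟨e.symm w, by simpa [G] using h, by simp⟩
      · rintro ⟨x, hx, rfl⟩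
        exact hx
    rw [this, Set.ncard_image_of_injective _ e.injective]
  · simp; omega
  · intro s hs
    have hc := hGraph_connected n hn (e '' s)
      (by rwa [Set.ncard_image_of_injective _ e.injective])
    let κ : G.induce sᶜ ≃g (hGraph n).induce (e '' s)ᶜ :=
      { toEquiv := e.subtypeEquiv (by intro x; simp)
        map_rel_iff' := by intro x y; rfl }
    exact κ.connected_iff.mpr hc
  · exact Finset.card_pair hEne
  · intro _ _; rfl
  · refine ⟨?_, ?_, ?_⟩
    · intro x hx
      simp only [Finset.coe_insert, Finset.coe_singleton, Set.mem_insert_iff,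
        Set.mem_singleton_iff] at hx
      rcases hx with rfl | rfl <;> simp [E, G, hGraph, hAdj]
    · intro _ _
      simp; omega
    · intro x hx y hy hne hv
      exfalso
      obtain ⟨v, hvx, hvy⟩ := hv
      simp only [Finset.coe_insert, Finset.coe_singleton, Set.mem_insert_iff,
        Set.mem_singleton_iff] at hx hy
      have hdis : ∀ v, v ∈ E a → v ∈ E b → False := by
        intro v h1 h2
        simp only [E, Sym2.mem_iff] at h1 h2
        rcases h1 with rfl | rfl <;> simp [hab] at h2
      rcases hx with rfl | rfl <;> rcases hy with rfl | rfl
      · exact hne rfl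
      · exact hdis v hvx hvy
      · exact hdis v hvy hvx
      · exact hne rfl
  · rintro ⟨f, ⟨h1, h2⟩, h3⟩
    have hmem : ∀ x : Sym2 (HVert n), x ∈ (hGraph n).edgeSet →
        Sym2.map e.symm x ∈ G.edgeSet := by
      intro x
      induction x with
      | _ u v => intro h; simpa [G] using h
    refine hGraph_not_ext n hn (f ∘ Sym2.map e.symm) ⟨?_, ?_⟩ a b hab ?_ ?_
    · intro x hx
      exact h1 _ (hmem x hx)
    · intro x hx y hy hne hv
      obtain ⟨v, hvx, hvy⟩ := hv
      refine h2 _ (hmem x hx) _ (hmem y hy) ?_ ⟨e.symm v, ?_, ?_⟩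
      · exact fun h => hne (Sym2.map.injective e.symm.injective h)
      · exact Sym2.mem_map.mpr ⟨v, hvx, rfl⟩
      · exact Sym2.mem_map.mpr ⟨v, hvy, rfl⟩
    · exact h3 (E a) (by simp)
    · exact h3 (E b) (by simp)
end
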